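/- For every integer m ≥ 2, the star K_{1,m} is determined by its spectrum if and only if m is prime. -/

import Mathlib

/-!
The adjacency matrix of a complete bipartite graph between disjoint sets `B` and `C`, possibly with
isolated vertices, factors as a product of an `n × 2` and a `2 × n` matrix. Hence it has rank at
most `2`, and its characteristic polynomial `p` satisfies `X ^ 2 * p = X ^ n * (X ^ 2 - |B| |C|)`
(`IsBipartiteBetween.charPoly_eq`).

If `m = a b` with `a, b ≥ 2`, then `K_{a,b}` with `(a - 1) (b - 1)` isolated vertices added is
therefore cospectral to `K_{1,m}`, and it is not a star (`not_isDS_mul`).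

Conversely, the spectrum determines the rank of a symmetric matrix, so a graph `H` cospectral to
`K_{1,m}` has adjacency matrix of rank at most `2`, and it has an edge `uv`. The vanishing of the
`3 × 3` minors containing the rows and columns of `u` and `v` says that two vertices `x` and `y` are
adjacent exactly when one is a neighbour of `u` and the other of `v`, so `H` is complete bipartite
between `N(u)` and `N(v)` up to isolated vertices (`isBipartiteBetween_of_rank_le`). The formula for
the characteristic polynomial gives `|N(u)| |N(v)| = m`; for `m` prime one side is a single vertex,
the other has `m` vertices, and they exhaust the `m + 1` vertices of `H`.
-/

open Polynomial SimpleGraph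

/-- Characteristic polynomial (over ℝ) of the adjacency matrix of a finite simple graph:
`det (x•I - A(G))`. -/
noncomputable def charPoly {V : Type} [Fintype V] [DecidableEq V] (G : SimpleGraph V) :
    Polynomial ℝ :=
  letI := Classical.decRel G.Adj
  Matrix.charpoly (SimpleGraph.adjMatrix ℝ G)

/-- The double star `P₂(a,b)`: an edge whose two endpoints carry `a` and `b` pendant
leaves respectively.  `Sum.inl none` and `Sum.inr none` are the two centers. -/
def doubleStar (a b : ℕ) : SimpleGraph (Option (Fin a) ⊕ Option (Fin b)) :=
  SimpleGraph.fromRel fun x y =>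
    (x = Sum.inl none ∧ (y = Sum.inr none ∨ ∃ i, y = Sum.inl (some i))) ∨
    (x = Sum.inr none ∧ ∃ j, y = Sum.inr (some j))

/-- Two finite graphs are cospectral if their adjacency matrices have the same
characteristic polynomial. -/
def Cospectral {V W : Type} [Fintype V] [DecidableEq V] [Fintype W] [DecidableEq W]
    (G : SimpleGraph V) (H : SimpleGraph W) : Prop :=
  charPoly G = charPoly H

/-- A graph is determined by its spectrum (DS) if every finite graph cospectral to it is
isomorphic to it. -/
def IsDS {V : Type} [Fintype V] [DecidableEq V] (G : SimpleGraph V) : Prop :=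
  ∀ (W : Type) (_ : Fintype W) (_ : DecidableEq W) (H : SimpleGraph W),
    Cospectral G H → Nonempty (G ≃g H)

/-- The graph `A_a`: `K_{2,a}` together with two new pendant vertices, both attached to the
fixed vertex `Sum.inl (Sum.inl 0)` of the partite set of size 2. -/
def graphA (a : ℕ) : SimpleGraph ((Fin 2 ⊕ Fin a) ⊕ Fin 2) :=
  SimpleGraph.fromRel fun x y =>
    (∃ i j, x = Sum.inl (Sum.inl i) ∧ y = Sum.inl (Sum.inr j)) ∨
    (∃ k, x = Sum.inl (Sum.inl 0) ∧ y = Sum.inr k)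

/-- The graph `B_a`: `K_{4,a}` together with one new vertex adjacent to exactly two of the
vertices of the partite set of size 4. -/
def graphB (a : ℕ) : SimpleGraph ((Fin 4 ⊕ Fin a) ⊕ Unit) :=
  SimpleGraph.fromRel fun x y =>
    (∃ i j, x = Sum.inl (Sum.inl i) ∧ y = Sum.inl (Sum.inr j)) ∨
    (∃ i : Fin 4, i.val < 2 ∧ x = Sum.inl (Sum.inl i) ∧ y = Sum.inr ())

/-- The graph `R`: a 4-cycle `0-1-2-3-0` with pendant vertices `4` and `5` attached to the
adjacent cycle vertices `0` and `1` respectively. -/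
def graphR : SimpleGraph (Fin 6) :=
  SimpleGraph.fromRel fun x y =>
    (x = 0 ∧ y = 1) ∨ (x = 1 ∧ y = 2) ∨ (x = 2 ∧ y = 3) ∨ (x = 3 ∧ y = 0) ∨
    (x = 0 ∧ y = 4) ∨ (x = 1 ∧ y = 5)

/-- `G` is the complete bipartite graph between the disjoint vertex sets `B` and `C`; the vertices
outside `B ∪ C` are isolated. -/
def IsBipartiteBetween {V : Type} (G : SimpleGraph V) (B C : Finset V) : Prop :=
  Disjoint B C ∧ ∀ x y, G.Adj x y ↔ (x ∈ B ∧ y ∈ C) ∨ (x ∈ C ∧ y ∈ B)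

/-- The adjacency matrix of a complete bipartite graph with isolated vertices factors through `ℝ²`:
the columns of the left factor are the indicators of `B` and `C`, and the rows of the right factor
are those of `C` and `B`. -/
lemma IsBipartiteBetween.adjMatrix_eq {V : Type} [Fintype V] [DecidableEq V] {G : SimpleGraph V}
    [DecidableRel G.Adj] {B C : Finset V} (h : IsBipartiteBetween G B C) :
    G.adjMatrix ℝ =
      (Matrix.of fun x => ![if x ∈ B then 1 else 0, if x ∈ C then 1 else 0] : Matrix V (Fin 2) ℝ) *
      (Matrix.of ![fun x => if x ∈ C then 1 else 0, fun x => if x ∈ B then 1 else 0] :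
        Matrix (Fin 2) V ℝ) := by
  ext x y
  have hx : x ∈ B → x ∉ C := fun hB => Finset.disjoint_left.mp h.1 hB
  simp only [adjMatrix_apply, h.2, Matrix.mul_apply, Fin.sum_univ_two, Matrix.of_apply,
    Matrix.cons_val_zero, Matrix.cons_val_one]
  by_cases h1 : x ∈ B <;> by_cases h2 : x ∈ C <;> by_cases h3 : y ∈ B <;> by_cases h4 : y ∈ C <;>
    simp_all

/-- The spectrum of a complete bipartite graph with isolated vertices: since the adjacency matrix
is a product of a `V × 2` and a `2 × V` matrix, its characteristic polynomial is, up to powers of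
`X`, that of the `2 × 2` product in the other order. -/
lemma IsBipartiteBetween.charPoly_eq {V : Type} [Fintype V] [DecidableEq V] {G : SimpleGraph V}
    {B C : Finset V} (h : IsBipartiteBetween G B C) :
    X ^ 2 * charPoly G =
      X ^ Fintype.card V * (X ^ 2 - Polynomial.C ((B.card * C.card : ℕ) : ℝ)) := by
  classical
  unfold charPoly
  have hBC : B ∩ C = ∅ := Finset.disjoint_iff_inter_eq_empty.mp h.1
  have hCB : C ∩ B = ∅ := by rw [Finset.inter_comm, hBC]
  have key := Matrix.charpoly_mul_comm'
    (Matrix.of fun x => ![if x ∈ B then 1 else 0, if x ∈ C then 1 else 0] : Matrix V (Fin 2) ℝ)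
    (Matrix.of ![fun x => if x ∈ C then 1 else 0, fun x => if x ∈ B then 1 else 0] :
        Matrix (Fin 2) V ℝ)
  rw [h.adjMatrix_eq]
  rw [Fintype.card_fin] at key
  have hprod : (Matrix.of ![fun x => if x ∈ C then 1 else 0, fun x => if x ∈ B then 1 else 0] :
        Matrix (Fin 2) V ℝ) *
      (Matrix.of fun x => ![if x ∈ B then 1 else 0, if x ∈ C then 1 else 0] :
        Matrix V (Fin 2) ℝ) = !![0, (C.card : ℝ); (B.card : ℝ), 0] := by
    ext i j
    rw [Matrix.mul_apply]
    fin_cases i <;> fin_cases j <;> simp [← ite_and, ← Finset.mem_inter, hBC, hCB]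
  rw [key, hprod, Matrix.charpoly_fin_two]
  congr 1
  simp [Matrix.trace_fin_two, Matrix.det_fin_two]
  ring

lemma IsBipartiteBetween.rank_le {V : Type} [Fintype V] [DecidableEq V] {G : SimpleGraph V}
    [DecidableRel G.Adj] {B C : Finset V} (h : IsBipartiteBetween G B C) :
    (G.adjMatrix ℝ).rank ≤ 2 := by
  rw [h.adjMatrix_eq]
  refine (Matrix.rank_mul_le_right _ _).trans ((Matrix.rank_le_card_height _).trans ?_)
  rw [Fintype.card_fin]

/-- The rank of a real symmetric matrix is the number of nonzero roots of its characteristic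
polynomial, counted with multiplicity. -/
lemma rank_eq_card_roots {V : Type} [Fintype V] [DecidableEq V] {A : Matrix V V ℝ}
    (hA : A.IsHermitian) : A.rank = (A.charpoly.roots.filter (· ≠ 0)).card := by
  rw [hA.rank_eq_card_non_zero_eigs, hA.roots_charpoly_eq_eigenvalues, Multiset.filter_map,
    Multiset.card_map, Fintype.card_subtype]
  rfl

lemma isHermitian_adjMatrix {V : Type} [Fintype V] (G : SimpleGraph V) [DecidableRel G.Adj] :
    (G.adjMatrix ℝ).IsHermitian := by
  rw [Matrix.IsHermitian, Matrix.conjTranspose_eq_transpose_of_trivial, transpose_adjMatrix]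

lemma Cospectral.rank_eq {V W : Type} [Fintype V] [DecidableEq V] [Fintype W] [DecidableEq W]
    {G : SimpleGraph V} {H : SimpleGraph W} [DecidableRel G.Adj] [DecidableRel H.Adj]
    (h : Cospectral G H) : (G.adjMatrix ℝ).rank = (H.adjMatrix ℝ).rank := by
  rw [rank_eq_card_roots (isHermitian_adjMatrix G), rank_eq_card_roots (isHermitian_adjMatrix H)]
  unfold Cospectral charPoly at h
  convert congrArg (fun p : ℝ[X] => (p.roots.filter (· ≠ 0)).card) h

lemma Cospectral.card_eq {V W : Type} [Fintype V] [DecidableEq V] [Fintype W] [DecidableEq W]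
    {G : SimpleGraph V} {H : SimpleGraph W} (h : Cospectral G H) :
    Fintype.card V = Fintype.card W := by
  have h' := congrArg Polynomial.natDegree h
  unfold charPoly at h'
  simpa using h'

/-- A graph with an edge `uv` whose adjacency matrix has rank at most `2` is complete bipartite
between `N(u)` and `N(v)`, up to isolated vertices. -/
lemma isBipartiteBetween_of_rank_le {V : Type} [Fintype V] [DecidableEq V] {G : SimpleGraph V}
    [DecidableRel G.Adj] (hr : (G.adjMatrix ℝ).rank ≤ 2) {u v : V} (huv : G.Adj u v) :
    IsBipartiteBetween G (G.neighborFinset u) (G.neighborFinset v) := by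
  -- The `3 × 3` minor with rows `u, v, x` and columns `u, v, y` vanishes.
  have key : ∀ x y, G.adjMatrix ℝ x y =
      G.adjMatrix ℝ u x * G.adjMatrix ℝ v y + G.adjMatrix ℝ v x * G.adjMatrix ℝ u y := by
    intro x y
    have hdet : ((G.adjMatrix ℝ).submatrix ![u, v, x] ![u, v, y]).det = 0 := by
      by_contra hne
      have h1 := Matrix.rank_of_isUnit _ ((Matrix.isUnit_iff_isUnit_det _).mpr (Ne.isUnit hne))
      have h2 := Matrix.rank_submatrix_le (G.adjMatrix ℝ) ![u, v, x] ![u, v, y]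
      rw [h1, Fintype.card_fin] at h2
      omega
    rw [Matrix.det_fin_three] at hdet
    have hxu : G.adjMatrix ℝ x u = G.adjMatrix ℝ u x := G.isSymm_adjMatrix.apply u x
    have hxv : G.adjMatrix ℝ x v = G.adjMatrix ℝ v x := G.isSymm_adjMatrix.apply v x
    have h1 : G.adjMatrix ℝ u v = 1 := by simp [huv]
    have h2 : G.adjMatrix ℝ v u = 1 := by simp [huv.symm]
    have h3 : G.adjMatrix ℝ u u = 0 := by simp
    have h4 : G.adjMatrix ℝ v v = 0 := by simp
    simp only [Matrix.submatrix_apply, Matrix.cons_val, hxu, hxv, h1, h2, h3, h4] at hdet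
    linarith
  constructor
  · rw [Finset.disjoint_left]
    intro x hx hx'
    rw [mem_neighborFinset] at hx hx'
    have := key x x
    norm_num [hx, hx'] at this
  · intro x y
    have hxy := key x y
    clear key
    simp only [adjMatrix_apply, mem_neighborFinset] at hxy ⊢
    by_cases h1 : G.Adj u x <;> by_cases h2 : G.Adj u y <;> by_cases h3 : G.Adj v x <;>
      by_cases h4 : G.Adj v y <;> by_cases h5 : G.Adj x y <;>
      first
      | simp [h1, h2, h3, h4, h5]; done
      | norm_num [h1, h2, h3, h4, h5] at hxy

lemma star_isBipartiteBetween (m : ℕ) :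
    IsBipartiteBetween (completeBipartiteGraph (Fin 1) (Fin m))
      (Finset.univ.map Function.Embedding.inl) (Finset.univ.map Function.Embedding.inr) := by
  constructor
  · simp
  · rintro (x | x) (y | y) <;> simp [completeBipartiteGraph, Subsingleton.elim _ (0 : Fin 1)]

/-- A graph with a spanning complete bipartite structure whose first side is one vertex is a
star. -/
lemma IsBipartiteBetween.star_iso {m : ℕ} {W : Type} [Fintype W] [DecidableEq W]
    {H : SimpleGraph W} {B C : Finset W} (h : IsBipartiteBetween H B C)
    (hW : Fintype.card W = m + 1) (hB : B.card = 1) (hC : C.card = m) :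
    Nonempty (completeBipartiteGraph (Fin 1) (Fin m) ≃g H) := by
  obtain ⟨c, rfl⟩ := Finset.card_eq_one.mp hB
  have hCc : ∀ x, x ∈ C ↔ x ≠ c := by
    have hsub : C ⊆ {c}ᶜ := by
      rw [Finset.subset_compl_iff_disjoint_left]
      exact h.1
    have : C = {c}ᶜ := Finset.eq_of_subset_of_card_le hsub (by
      rw [Finset.card_compl, Finset.card_singleton]; omega)
    intro x
    simp [this]
  have e : Fin 1 ⊕ Fin m ≃ W := Fintype.equivOfCardEq (by simp [hW, add_comm])
  let f : Fin 1 ⊕ Fin m ≃ W := e.trans (Equiv.swap (e (Sum.inl 0)) c)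
  have hf : ∀ z, f z = c ↔ z = Sum.inl 0 := by
    have h0 : f (Sum.inl 0) = c := by simp [f]
    intro z
    rw [← h0, f.injective.eq_iff]
  refine ⟨⟨f, ?_⟩⟩
  intro x y
  rw [h.2]
  simp only [Finset.mem_singleton, hCc, ne_eq, hf]
  rcases x with x | x <;> rcases y with y | y <;>
    simp [completeBipartiteGraph, Subsingleton.elim _ (0 : Fin 1)]

/-- For `2 ≤ a, b`, adding `(a - 1) * (b - 1)` isolated vertices to `K_{a,b}` gives a graph
cospectral to `K_{1,ab}`, which is not a star since it has an isolated vertex. -/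
lemma not_isDS_mul {a b : ℕ} (ha : 2 ≤ a) (hb : 2 ≤ b) :
    ¬ IsDS (completeBipartiteGraph (Fin 1) (Fin (a * b))) := by
  intro hDS
  have hab : a + b ≤ a * b := by nlinarith
  obtain ⟨B, -, hB⟩ := Finset.exists_subset_card_eq
    (s := (Finset.univ : Finset (Fin (a * b + 1)))) (n := a) (by simp; omega)
  obtain ⟨C, hCB, hC⟩ := Finset.exists_subset_card_eq (s := Bᶜ) (n := b) (by
    rw [Finset.card_compl, hB, Fintype.card_fin]; omega)
  have hdisj : Disjoint B C := by rwa [← Finset.subset_compl_iff_disjoint_left]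
  let H : SimpleGraph (Fin (a * b + 1)) :=
    { Adj := fun x y => (x ∈ B ∧ y ∈ C) ∨ (x ∈ C ∧ y ∈ B)
      symm := ⟨fun x y h => by tauto⟩
      loopless := ⟨fun x h => by
        have hx : x ∈ B → x ∉ C := fun hx => Finset.disjoint_left.mp hdisj hx
        tauto⟩ }
  have hH : IsBipartiteBetween H B C := ⟨hdisj, fun _ _ => Iff.rfl⟩
  obtain ⟨φ⟩ := hDS _ inferInstance inferInstance H (by
    have h1 := (star_isBipartiteBetween (a * b)).charPoly_eq
    have h2 := hH.charPoly_eq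
    simp only [hB, hC, Finset.card_map, Finset.card_univ, Fintype.card_fin, Fintype.card_sum,
      one_mul] at h1 h2
    rw [add_comm 1, ← h2] at h1
    exact mul_left_cancel₀ (pow_ne_zero 2 X_ne_zero) h1)
  obtain ⟨z, hz⟩ : ∃ z, z ∉ B ∪ C := by
    by_contra! hall
    have := Finset.card_union_le B C
    rw [Finset.eq_univ_iff_forall.mpr hall, Finset.card_univ, Fintype.card_fin] at this
    omega
  rw [Finset.mem_union, not_or] at hz
  have hnone : ∀ y, ¬ H.Adj z y := by
    rintro y (⟨h, -⟩ | ⟨h, -⟩)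
    exacts [hz.1 h, hz.2 h]
  obtain ⟨y, hy⟩ : ∃ y, (completeBipartiteGraph (Fin 1) (Fin (a * b))).Adj (φ.symm z) y := by
    rcases φ.symm z with x | x
    · exact ⟨Sum.inr ⟨0, by omega⟩, by simp [completeBipartiteGraph]⟩
    · exact ⟨Sum.inl 0, by simp [completeBipartiteGraph]⟩
  have := φ.map_adj_iff.mpr hy
  rw [RelIso.apply_symm_apply] at this
  exact hnone _ this

lemma isDS_of_prime {m : ℕ} (hm : m.Prime) :
    IsDS (completeBipartiteGraph (Fin 1) (Fin m)) := by
  classical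
  intro W _ _ H hco
  have hW : Fintype.card W = m + 1 := by
    rw [← hco.card_eq]; simp [add_comm]
  have hstar := star_isBipartiteBetween m
  -- Comparing with the spectrum of the star, any bipartition of `H` has sides of product `m`.
  have hprod : ∀ B C : Finset W, IsBipartiteBetween H B C → B.card * C.card = m := by
    intro B C h
    have h1 := hstar.charPoly_eq
    have h2 := h.charPoly_eq
    rw [show charPoly _ = charPoly H from hco, h2, hco.card_eq] at h1
    have h3 := mul_left_cancel₀ (pow_ne_zero _ X_ne_zero) h1
    have h4 : B.card * C.card = _ := Nat.cast_injective
      (Polynomial.C_injective (sub_right_injective h3))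
    simpa using h4
  obtain ⟨u, v, huv⟩ : ∃ u v, H.Adj u v := by
    by_contra! hno
    have := hprod ∅ ∅ ⟨by simp, by simpa using hno⟩
    simp at this
    exact hm.ne_zero this.symm
  have hr : (H.adjMatrix ℝ).rank ≤ 2 := hco.rank_eq ▸ hstar.rank_le
  have hbip := isBipartiteBetween_of_rank_le hr huv
  have hbip' := isBipartiteBetween_of_rank_le hr huv.symm
  have hmul := hprod _ _ hbip
  rcases hm.eq_one_or_self_of_dvd _ (Dvd.intro _ hmul) with h1 | h1
  · exact hbip.star_iso hW h1 (by rwa [h1, one_mul] at hmul)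
  · refine hbip'.star_iso hW ?_ h1
    rw [h1] at hmul
    exact Nat.eq_of_mul_eq_mul_left hm.pos (by rw [hmul, mul_one])

/-- for every `m ≥ 2`, the star `K_{1,m}` is determined by its spectrum if
and only if `m` is prime. -/
theorem star_DS_iff_prime (m : ℕ) (hm : 2 ≤ m) :
    IsDS (completeBipartiteGraph (Fin 1) (Fin m)) ↔ Nat.Prime m := by
  refine ⟨fun hDS => ?_, isDS_of_prime⟩
  by_contra hnp
  obtain ⟨a, b, ha, hb, rfl⟩ := (Nat.not_prime_iff_exists_mul_eq hm).mp hnp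
  refine not_isDS_mul ?_ ?_ hDS
  · by_contra! h
    interval_cases a <;> omega
  · by_contra! h
    interval_cases b <;> omega
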